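/- arXiv:1406.2622 — 2 statements merged into one kernel-verified Lean document; each statement's English description precedes it below -/
import Mathlib

section
/- Let n ≥ 1, let K be a real symmetric positive semidefinite n×n matrix, Y ∈ ℝⁿ, λ > 0 and m > 1. Let α ∈ ℝⁿ be a minimizer over ℝⁿ of the M-RLSR objective J(a) = ‖Y − K·a‖² + n·λ·(aᵀ·K·a)^(m/2), and suppose αᵀ·K·α > 0. Set λ₂ = (m/2)·λ·(αᵀ·K·α)^(m/2 − 1). Then λ₂ > 0 and α is a minimizer over ℝⁿ of the kernel ridge regression objective J₂(a) = ‖Y − K·a‖² + n·λ₂·(aᵀ·K·a). In particular, on the given training data the M-RLSR algorithm with parameter λ and the KRR algorithm with parameter λ₂ produce the same solution (weak equivalence). -/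
open Matrix

/-!
Along any ray from `α`, `t ↦ φ (g (α + t d))` and `t ↦ φ'(g α) * g (α + t d)` have the same right
derivative at `0`, so the right derivatives of `f + φ ∘ g` and of its linearization
`f + φ'(g α) * g` agree there. A local minimum of the former makes this common derivative
nonnegative, and for the convex function `f + φ'(g α) * g` that forces a global minimum.
M-RLSR and KRR are the case where `f` is the squared residual, `g` is the quadratic form of `K`
and `φ s = n * λ * s ^ (m / 2)`.
-/

theorem convexOn_apply_self_of_isNonneg {R M : Type*} [CommRing R] [PartialOrder R]
    [IsOrderedRing R] [AddCommGroup M] [Module R M] {B : LinearMap.BilinForm R M}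
    (hB : B.IsNonneg) : ConvexOn R Set.univ fun x => B x x := by
  refine ⟨convex_univ, fun x _ y _ a b ha hb hab => sub_nonneg.1 ?_⟩
  obtain rfl : b = 1 - a := eq_sub_of_add_eq' hab
  have hgap : a • B x x + (1 - a) • B y y - B (a • x + (1 - a) • y) (a • x + (1 - a) • y)
      = a * (1 - a) * B (x - y) (x - y) := by
    simp only [map_add, map_sub, map_smul, LinearMap.add_apply, LinearMap.sub_apply,
      LinearMap.smul_apply, smul_eq_mul]
    ring
  exact hgap ▸ mul_nonneg (mul_nonneg ha hb) (hB.nonneg _)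

theorem convexOn_dotProduct_mulVec_of_posSemidef {ι : Type*} [Fintype ι] {K : Matrix ι ι ℝ}
    (hK : K.PosSemidef) : ConvexOn ℝ Set.univ fun a => a ⬝ᵥ K *ᵥ a := by
  classical
  have hB : (Matrix.toBilin' K).IsNonneg :=
    ⟨fun a => by simpa [Matrix.toBilin'_apply'] using hK.dotProduct_mulVec_nonneg a⟩
  simpa only [Matrix.toBilin'_apply'] using convexOn_apply_self_of_isNonneg hB

theorem convexOn_sum_sub_mulVec_sq {ι κ : Type*} [Fintype ι] [Fintype κ] (A : Matrix κ ι ℝ)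
    (y : κ → ℝ) : ConvexOn ℝ Set.univ fun a => ∑ i, (y i - (A *ᵥ a) i) ^ 2 := by
  let residual : (ι → ℝ) →ᵃ[ℝ] κ → ℝ := AffineMap.const ℝ _ y - A.mulVecLin.toAffineMap
  have hdot : LinearMap.BilinForm.IsNonneg (dotProductBilin ℝ ℝ : LinearMap.BilinForm ℝ (κ → ℝ)) :=
    ⟨fun v => by simpa using dotProduct_self_star_nonneg v⟩
  have heq : (fun a => ∑ i, (y i - (A *ᵥ a) i) ^ 2) =
      (fun v => dotProductBilin ℝ ℝ v v) ∘ residual := by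
    ext a
    simp [residual, dotProductBilin, dotProduct, sq]
  exact heq ▸ (convexOn_apply_self_of_isNonneg hdot).comp_affineMap residual

section RightDerivative

open Set

theorem nonneg_of_isLocalMinOn_of_hasDerivWithinAt_Ioi {f : ℝ → ℝ} {f' x : ℝ}
    (hmin : IsLocalMinOn f (Ioi x) x) (hf : HasDerivWithinAt f f' (Ioi x) x) : 0 ≤ f' := by
  have hone : (1 : ℝ) ∈ posTangentConeAt (Ioi x) x :=
    one_mem_posTangentConeAt_iff_mem_closure.2 (by simp)
  simpa using hmin.hasFDerivWithinAt_nonneg hf.hasFDerivWithinAt hone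

theorem add_mul_le_add_mul_of_isLocalMin_add_comp {S : Set ℝ} {f g φ : ℝ → ℝ} {c x y : ℝ}
    (hf : ConvexOn ℝ S f) (hg : ConvexOn ℝ S g) (hφ : HasDerivAt φ c (g x)) (hc : 0 ≤ c)
    (hmin : IsLocalMin (fun t => f t + φ (g t)) x) (hx : x ∈ interior S) (hy : y ∈ S)
    (hxy : x < y) : f x + c * g x ≤ f y + c * g y := by
  have hf' := hf.hasDerivWithinAt_rightDeriv_of_mem_interior hx
  have hg' := hg.hasDerivWithinAt_rightDeriv_of_mem_interior hx
  set D := derivWithin f (Ioi x) x + c * derivWithin g (Ioi x) x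
  have hD_nonneg : 0 ≤ D := nonneg_of_isLocalMinOn_of_hasDerivWithinAt_Ioi (hmin.on _)
    (hf'.add (hφ.comp_hasDerivWithinAt x hg'))
  have hD_le_slope : D ≤ slope (fun t => f t + c * g t) x y :=
    (hf.add (hg.smul hc)).le_slope_of_hasDerivWithinAt_Ioi (interior_subset hx) hy hxy
      (hf'.add (hg'.const_mul c))
  exact (slope_nonneg_iff_of_le hxy.le).1 (hD_nonneg.trans hD_le_slope)

end RightDerivative

section TopologicalVectorSpace

variable {E : Type*} [AddCommGroup E] [Module ℝ E] [TopologicalSpace E]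
  [IsTopologicalAddGroup E] [ContinuousSMul ℝ E] {S : Set E}

theorem isMinOn_add_mul_of_isLocalMin_add_comp {f g : E → ℝ} {φ : ℝ → ℝ} {c : ℝ} {x : E}
    (hf : ConvexOn ℝ S f) (hg : ConvexOn ℝ S g) (hφ : HasDerivAt φ c (g x)) (hc : 0 ≤ c)
    (hx : x ∈ interior S) (hmin : IsLocalMin (fun y => f y + φ (g y)) x) :
    IsMinOn (fun y => f y + c * g y) S x := by
  refine isMinOn_iff.2 fun y hy => ?_
  let ℓ : ℝ →ᵃ[ℝ] E := AffineMap.lineMap x y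
  have hℓ : Continuous ℓ := AffineMap.lineMap_continuous
  have hℓ₀ : ℓ 0 = x := AffineMap.lineMap_apply_zero x y
  have hℓ₁ : ℓ 1 = y := AffineMap.lineMap_apply_one x y
  rw [← hℓ₀] at hφ hx hmin
  have h := add_mul_le_add_mul_of_isLocalMin_add_comp (hf.comp_affineMap ℓ)
    (hg.comp_affineMap ℓ) hφ hc (hmin.comp_continuous hℓ.continuousAt)
    (preimage_interior_subset_interior_preimage hℓ hx) (show ℓ 1 ∈ S by rwa [hℓ₁]) one_pos
  simpa only [Function.comp_apply, hℓ₀, hℓ₁] using h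

theorem mrlsr_weakly_equivalent_to_krr_general {f g : E → ℝ}
    (hf : ConvexOn ℝ S f) (hg : ConvexOn ℝ S g) {N lam m : ℝ} (hN : 0 ≤ N) (hlam : 0 < lam)
    (hm : 0 < m) {J : E → ℝ} (hJ : ∀ a, J a = f a + N * lam * g a ^ (m / 2))
    {α : E} (hα : α ∈ interior S) (hmin : IsLocalMin J α) (hpos : 0 < g α)
    {lam₂ : ℝ} (hlam₂ : lam₂ = (m / 2) * lam * g α ^ (m / 2 - 1))
    {J₂ : E → ℝ} (hJ₂ : ∀ a, J₂ a = f a + N * lam₂ * g a) :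
    0 < lam₂ ∧ IsMinOn J₂ S α := by
  have hlam₂_pos : 0 < lam₂ := by rw [hlam₂]; positivity
  have hderiv : HasDerivAt (fun s => N * lam * s ^ (m / 2)) (N * lam₂) (g α) :=
    ((Real.hasDerivAt_rpow_const (.inl hpos.ne')).const_mul (N * lam)).congr_deriv
      (by rw [hlam₂]; ring)
  rw [funext hJ] at hmin
  rw [funext hJ₂]
  exact ⟨hlam₂_pos, isMinOn_add_mul_of_isLocalMin_add_comp hf hg hderiv (by positivity) hα hmin⟩

end TopologicalVectorSpace

theorem mrlsr_weakly_equivalent_to_krr (n : ℕ) (hn : 1 ≤ n)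
    (K : Matrix (Fin n) (Fin n) ℝ) (hK : K.PosSemidef)
    (Y : Fin n → ℝ) (lam m : ℝ) (hlam : 0 < lam) (hm : 1 < m)
    (J : (Fin n → ℝ) → ℝ)
    (hJ : ∀ a, J a = (∑ i, (Y i - K.mulVec a i) ^ 2) + n * lam * (a ⬝ᵥ K.mulVec a) ^ (m / 2))
    (α : Fin n → ℝ) (hmin : ∀ a, J α ≤ J a) (hpos : 0 < α ⬝ᵥ K.mulVec α)
    (lam₂ : ℝ) (hlam₂ : lam₂ = (m / 2) * lam * (α ⬝ᵥ K.mulVec α) ^ (m / 2 - 1))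
    (J₂ : (Fin n → ℝ) → ℝ)
    (hJ₂ : ∀ a, J₂ a = (∑ i, (Y i - K.mulVec a i) ^ 2) + n * lam₂ * (a ⬝ᵥ K.mulVec a)) :
    0 < lam₂ ∧ ∀ a, J₂ α ≤ J₂ a := by
  simpa only [isMinOn_univ_iff] using mrlsr_weakly_equivalent_to_krr_general
    (convexOn_sum_sub_mulVec_sq K Y) (convexOn_dotProduct_mulVec_of_posSemidef hK) n.cast_nonneg
    hlam (one_pos.trans hm) hJ (by simp) (.of_forall hmin) hpos hlam₂ hJ₂
end

section
/- Let X be a type, H a real inner product space, κ > 0, and ev : H →ₗ[ℝ] (X → ℝ) a linear map satisfying |ev f x| ≤ κ·‖f‖ for all f ∈ H, x ∈ X. Let n ≥ 1, (x₁,y₁),…,(xₙ,yₙ) ∈ X × ℝ with |yₖ| ≤ C_y for all k, λ > 0, m ≥ 2 a real number, and fix i with 1 ≤ i ≤ n. Suppose f_Z minimizes over H the objective J_Z(f) = (1/n)·Σₖ₌₁ⁿ (yₖ − ev f xₖ)² + λ·‖f‖^m, and f_{Z^i} minimizes over H the objective J_{Z^i}(f) = (1/n)·Σ_{k≠i} (yₖ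 − ev f xₖ)² + λ·‖f‖^m. Then, with C = 2·(C_y + κ·(C_y²/λ)^(1/m)): ‖f_Z − f_{Z^i}‖ ≤ (2^(m−2)·C·κ/(λ·n))^(1/(m−1)). -/
/-!
The idea is to compare both minimizers with their midpoint. The two objectives differ only by the
loss of the removed example, and the remaining loss is convex, so adding the two comparisons leaves
the gap between the two sides of Clarkson's inequality for `‖·‖ ^ m`, namely
`2 λ (‖f_Z - f_{Z^i}‖ / 2) ^ m`, bounded by the change of the single removed loss between `f_Z` and
the midpoint. Comparison with the zero hypothesis confines both minimizers to the ball of radius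
`(C_y² / λ) ^ (1 / m)`, where that loss is Lipschitz with constant `C κ / n`; dividing by one power
of the distance gives the bound.
-/

open Finset

theorem le_rpow_one_div_sub_one_of_rpow_le_mul {t a p : ℝ} (ht : 0 ≤ t) (ha : 0 ≤ a) (hp : 1 < p)
    (h : t ^ p ≤ a * t) : t ≤ a ^ (1 / (p - 1)) := by
  rcases ht.eq_or_lt with rfl | htpos
  · exact Real.rpow_nonneg ha _
  rw [one_div, Real.le_rpow_inv_iff_of_pos ht ha (sub_pos.2 hp), Real.rpow_sub_one htpos.ne']
  exact (div_le_iff₀ htpos).2 h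

section InnerProduct

variable {H : Type*} [SeminormedAddCommGroup H] [InnerProductSpace ℝ H]

theorem norm_midpoint_sq_add_half_norm_sub_sq (a b : H) :
    ‖midpoint ℝ a b‖ ^ 2 + (‖a - b‖ / 2) ^ 2 = (‖a‖ ^ 2 + ‖b‖ ^ 2) / 2 := by
  have hmid : ‖midpoint ℝ a b‖ = ‖a + b‖ / 2 := by
    rw [midpoint_eq_smul_add, norm_smul, invOf_eq_inv, norm_inv, Real.norm_two]
    ring
  rw [hmid]
  linarith [parallelogram_law_with_norm ℝ a b]

theorem norm_midpoint_rpow_add_half_norm_sub_rpow_le (a b : H) {p : ℝ} (hp : 2 ≤ p) :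
    ‖midpoint ℝ a b‖ ^ p + (‖a - b‖ / 2) ^ p ≤ (‖a‖ ^ p + ‖b‖ ^ p) / 2 := by
  have hp' : 1 ≤ p / 2 := by linarith
  have rpow_eq {t : ℝ} (ht : 0 ≤ t) : t ^ p = (t ^ 2) ^ (p / 2) := by
    rw [← Real.rpow_natCast_mul ht]
    congr 1
    push_cast
    ring
  rw [rpow_eq (norm_nonneg (midpoint ℝ a b)), rpow_eq (by positivity : 0 ≤ ‖a - b‖ / 2),
    rpow_eq (norm_nonneg a), rpow_eq (norm_nonneg b)]
  calc (‖midpoint ℝ a b‖ ^ 2) ^ (p / 2) + ((‖a - b‖ / 2) ^ 2) ^ (p / 2)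
      ≤ (‖midpoint ℝ a b‖ ^ 2 + (‖a - b‖ / 2) ^ 2) ^ (p / 2) :=
        Real.add_rpow_le_rpow_add (sq_nonneg _) (sq_nonneg _) hp'
    _ = ((1 / 2 : ℝ) • ‖a‖ ^ 2 + (1 / 2 : ℝ) • ‖b‖ ^ 2) ^ (p / 2) := by
        rw [norm_midpoint_sq_add_half_norm_sub_sq, smul_eq_mul, smul_eq_mul]
        congr 1
        ring
    _ ≤ (1 / 2 : ℝ) • (‖a‖ ^ 2) ^ (p / 2) + (1 / 2 : ℝ) • (‖b‖ ^ 2) ^ (p / 2) :=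
        (convexOn_rpow hp').2 (sq_nonneg ‖a‖) (sq_nonneg ‖b‖) (by norm_num) (by norm_num)
          (by norm_num)
    _ = ((‖a‖ ^ 2) ^ (p / 2) + (‖b‖ ^ 2) ^ (p / 2)) / 2 := by
        rw [smul_eq_mul, smul_eq_mul]
        ring

end InnerProduct

section Convex

variable {E : Type*} [AddCommGroup E] [Module ℝ E] {K : Set E}

theorem map_midpoint_le_of_convexOn {Φ : E → ℝ} (hΦ : ConvexOn ℝ K Φ) {a b : E} (ha : a ∈ K)
    (hb : b ∈ K) :
    Φ (midpoint ℝ a b) ≤ (Φ a + Φ b) / 2 := by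
  have h := hΦ.2 ha hb (by norm_num : (0 : ℝ) ≤ 1 / 2) (by norm_num : (0 : ℝ) ≤ 1 / 2)
    (by norm_num)
  rw [← smul_add, smul_eq_mul, smul_eq_mul] at h
  rw [midpoint_eq_smul_add, invOf_eq_inv, ← one_div]
  linarith

theorem convexOn_finset_sum {ι : Type*} {s : Finset ι} {Φ : ι → E → ℝ} (hK : Convex ℝ K)
    (hΦ : ∀ k ∈ s, ConvexOn ℝ K (Φ k)) : ConvexOn ℝ K fun f ↦ ∑ k ∈ s, Φ k f := by
  rw [← sum_fn]
  exact sum_induction Φ (ConvexOn ℝ K) (fun _ _ ↦ ConvexOn.add) (convexOn_const 0 hK) hΦ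

end Convex

section NormPowerRegularization

variable {H : Type*} [SeminormedAddCommGroup H] {K : Set H} {lam m : ℝ}

theorem norm_le_of_isMinOn_add_norm_rpow {Φ : H → ℝ} {f : H} (hlam : 0 < lam) (hm : 0 < m)
    (hΦ : 0 ≤ Φ f) (h0 : 0 ∈ K) (hf : IsMinOn (fun h ↦ Φ h + lam * ‖h‖ ^ m) K f) :
    ‖f‖ ≤ (Φ 0 / lam) ^ (1 / m) := by
  have hle : Φ f + lam * ‖f‖ ^ m ≤ Φ 0 := by
    simpa [Real.zero_rpow hm.ne'] using isMinOn_iff.1 hf 0 h0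
  have hpow : ‖f‖ ^ m ≤ Φ 0 / lam := by
    rw [le_div_iff₀' hlam]
    linarith
  rw [one_div]
  exact (Real.le_rpow_inv_iff_of_pos (norm_nonneg f)
    ((Real.rpow_nonneg (norm_nonneg f) m).trans hpow) hm).2 hpow

variable [InnerProductSpace ℝ H] {Φ g : H → ℝ} {f f' : H}

theorem two_mul_half_norm_sub_rpow_le_of_isMinOn (hlam : 0 ≤ lam) (hm : 2 ≤ m)
    (hΦ : ConvexOn ℝ K Φ) (hfK : f ∈ K) (hfK' : f' ∈ K)
    (hf : IsMinOn (fun h ↦ g h + Φ h + lam * ‖h‖ ^ m) K f)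
    (hf' : IsMinOn (fun h ↦ Φ h + lam * ‖h‖ ^ m) K f') :
    2 * lam * (‖f - f'‖ / 2) ^ m ≤ g (midpoint ℝ f f') - g f := by
  have hmem : midpoint ℝ f f' ∈ K := hΦ.1.midpoint_mem hfK hfK'
  have hmin := isMinOn_iff.1 hf _ hmem
  have hmin' := isMinOn_iff.1 hf' _ hmem
  have hconvex := map_midpoint_le_of_convexOn hΦ hfK hfK'
  have hclarkson := mul_le_mul_of_nonneg_left
    (norm_midpoint_rpow_add_half_norm_sub_rpow_le f f' hm) hlam
  linarith

theorem norm_sub_le_of_isMinOn_add_norm_rpow {L : ℝ} (hL : 0 ≤ L) (hlam : 0 < lam) (hm : 2 ≤ m)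
    (hΦ : ConvexOn ℝ K Φ) (hfK : f ∈ K) (hfK' : f' ∈ K)
    (hf : IsMinOn (fun h ↦ g h + Φ h + lam * ‖h‖ ^ m) K f)
    (hf' : IsMinOn (fun h ↦ Φ h + lam * ‖h‖ ^ m) K f')
    (hg : g (midpoint ℝ f f') - g f ≤ L * ‖midpoint ℝ f f' - f‖) :
    ‖f - f'‖ ≤ (2 ^ (m - 2) * L / lam) ^ (1 / (m - 1)) := by
  have hm1 : 0 < m - 1 := by linarith
  have hdist : ‖midpoint ℝ f f' - f‖ = ‖f - f'‖ / 2 := by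
    rw [← dist_eq_norm, dist_midpoint_left (𝕜 := ℝ), dist_eq_norm, Real.norm_two]
    ring
  have hpow : (‖f - f'‖ / 2) ^ m ≤ L / (2 * lam) * (‖f - f'‖ / 2) := by
    rw [hdist] at hg
    rw [div_mul_eq_mul_div, le_div_iff₀' (by positivity)]
    exact (two_mul_half_norm_sub_rpow_le_of_isMinOn hlam.le hm hΦ hfK hfK' hf hf').trans hg
  have hhalf : ‖f - f'‖ / 2 ≤ (L / (2 * lam)) ^ (1 / (m - 1)) :=
    le_rpow_one_div_sub_one_of_rpow_le_mul (by positivity) (by positivity) (by linarith) hpow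
  calc ‖f - f'‖
      ≤ 2 * (L / (2 * lam)) ^ (1 / (m - 1)) := by linarith
    _ = (2 ^ (m - 1) * (L / (2 * lam))) ^ (1 / (m - 1)) := by
        rw [Real.mul_rpow (by positivity) (by positivity), one_div,
          Real.rpow_rpow_inv zero_le_two hm1.ne']
    _ = (2 ^ (m - 2) * L / lam) ^ (1 / (m - 1)) := by
        rw [show m - 1 = m - 2 + 1 by ring, Real.rpow_add_one two_ne_zero]
        congr 1
        field_simp

end NormPowerRegularization

theorem sub_sq_sub_sub_sq_le_of_abs_le_mul_norm {H : Type*} [SeminormedAddCommGroup H]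
    [Module ℝ H] {φ : H →ₗ[ℝ] ℝ} {κ B R c : ℝ} {a b : H} (hκ : 0 ≤ κ)
    (hφ : ∀ f, |φ f| ≤ κ * ‖f‖) (hc : |c| ≤ B) (ha : ‖a‖ ≤ R) (hb : ‖b‖ ≤ R) :
    (c - φ a) ^ 2 - (c - φ b) ^ 2 ≤ 2 * (B + κ * R) * κ * ‖a - b‖ := by
  have residual_le {f : H} (hf : ‖f‖ ≤ R) : |c - φ f| ≤ B + κ * R :=
    calc |c - φ f| ≤ |c| + |φ f| := abs_sub _ _
      _ ≤ B + κ * R := add_le_add hc ((hφ f).trans (mul_le_mul_of_nonneg_left hf hκ))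
  have hsum : |(c - φ a) + (c - φ b)| ≤ 2 * (B + κ * R) := by
    linarith [abs_add_le (c - φ a) (c - φ b), residual_le ha, residual_le hb]
  calc (c - φ a) ^ 2 - (c - φ b) ^ 2
      = ((c - φ a) + (c - φ b)) * φ (b - a) := by
        rw [map_sub]
        ring
    _ ≤ |(c - φ a) + (c - φ b)| * |φ (b - a)| := (le_abs_self _).trans_eq (abs_mul _ _)
    _ ≤ 2 * (B + κ * R) * (κ * ‖b - a‖) :=
        mul_le_mul hsum (hφ _) (abs_nonneg _) ((abs_nonneg _).trans hsum)
    _ = 2 * (B + κ * R) * κ * ‖a - b‖ := by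
        rw [norm_sub_rev]
        ring

section EmpiricalRisk

variable {ι X H : Type*} [AddCommGroup H] [Module ℝ H]

/-- The empirical squared risk of the hypothesis `f` on the examples indexed by `s`, that is, the
objective without its regularization term. The normalization `N` does not depend on `s`, because the
leave-one-out objective keeps the normalization of the full training set. -/
noncomputable def empiricalRisk (ev : H →ₗ[ℝ] (X → ℝ)) (x : ι → X) (y : ι → ℝ) (N : ℝ)
    (s : Finset ι) (f : H) : ℝ :=
  (1 / N) * ∑ k ∈ s, (y k - ev f (x k)) ^ 2

variable (ev : H →ₗ[ℝ] (X → ℝ)) (x : ι → X) (y : ι → ℝ) {N : ℝ} (s : Finset ι)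

theorem empiricalRisk_nonneg (hN : 0 ≤ N) (f : H) : 0 ≤ empiricalRisk ev x y N s f :=
  mul_nonneg (one_div_nonneg.2 hN) (sum_nonneg fun _ _ ↦ sq_nonneg _)

theorem convexOn_empiricalRisk (hN : 0 ≤ N) {K : Set H} (hK : Convex ℝ K) :
    ConvexOn ℝ K (empiricalRisk ev x y N s) := by
  have hloss (k : ι) : ConvexOn ℝ K fun f ↦ (y k - ev f (x k)) ^ 2 :=
    (even_two.convexOn_pow.comp_affineMap (AffineMap.const ℝ H (y k) -
      (LinearMap.proj (x k) ∘ₗ ev).toAffineMap)).subset (Set.subset_univ K) hK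
  exact (convexOn_finset_sum hK fun k _ ↦ hloss k).smul (one_div_nonneg.2 hN)

variable {y s} in
theorem empiricalRisk_zero_le {B : ℝ} (hN : 0 < N) (hs : #s ≤ N) (hy : ∀ k ∈ s, |y k| ≤ B) :
    empiricalRisk ev x y N s 0 ≤ B ^ 2 := by
  have hsum : ∑ k ∈ s, (y k - ev 0 (x k)) ^ 2 ≤ N * B ^ 2 :=
    calc ∑ k ∈ s, (y k - ev 0 (x k)) ^ 2
        ≤ #s • B ^ 2 := sum_le_card_nsmul _ _ _ fun k hk ↦ by
          simpa using sq_le_sq.2 ((hy k hk).trans (le_abs_self B))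
      _ ≤ N * B ^ 2 := by
          rw [nsmul_eq_mul]
          exact mul_le_mul_of_nonneg_right hs (sq_nonneg B)
  rwa [empiricalRisk, one_div, inv_mul_le_iff₀ hN]

variable {s} in
theorem empiricalRisk_eq_add_erase [DecidableEq ι] {i : ι} (hi : i ∈ s) (f : H) :
    empiricalRisk ev x y N s f =
      (1 / N) * (y i - ev f (x i)) ^ 2 + empiricalRisk ev x y N (s.erase i) f := by
  rw [empiricalRisk, empiricalRisk, ← add_sum_erase s _ hi, mul_add]

end EmpiricalRisk

theorem norm_le_of_isMinOn_empiricalRisk {ι X H : Type*} [SeminormedAddCommGroup H] [Module ℝ H]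
    {K : Set H} (h0 : 0 ∈ K) {ev : H →ₗ[ℝ] (X → ℝ)} {x : ι → X} {y : ι → ℝ} {N B lam m : ℝ}
    {s : Finset ι} (hN : 0 < N) (hs : #s ≤ N) (hy : ∀ k ∈ s, |y k| ≤ B) (hlam : 0 < lam)
    (hm : 0 < m) {f : H} (hf : IsMinOn (fun h ↦ empiricalRisk ev x y N s h + lam * ‖h‖ ^ m) K f) :
    ‖f‖ ≤ (B ^ 2 / lam) ^ (1 / m) :=
  calc ‖f‖ ≤ (empiricalRisk ev x y N s 0 / lam) ^ (1 / m) :=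
        norm_le_of_isMinOn_add_norm_rpow hlam hm (empiricalRisk_nonneg ev x y s hN.le f) h0 hf
    _ ≤ (B ^ 2 / lam) ^ (1 / m) := by
        have hnonneg := empiricalRisk_nonneg ev x y s hN.le 0
        gcongr
        exact empiricalRisk_zero_le ev x hN hs hy

theorem mrlsr_hypothesis_stability_bound_general {ι X H : Type*} [DecidableEq ι]
    [SeminormedAddCommGroup H] [InnerProductSpace ℝ H] {K : Set H} (hK : Convex ℝ K) (h0 : 0 ∈ K)
    {ev : H →ₗ[ℝ] (X → ℝ)} {x : ι → X} {y : ι → ℝ} {N κ B lam m : ℝ} {s : Finset ι} {i : ι}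
    (hi : i ∈ s) (hs : #s ≤ N) (hκ : 0 ≤ κ) (hev : ∀ f, |ev f (x i)| ≤ κ * ‖f‖)
    (hy : ∀ k ∈ s, |y k| ≤ B) (hlam : 0 < lam) (hm : 2 ≤ m) {f f' : H} (hfK : f ∈ K)
    (hfK' : f' ∈ K) (hf : IsMinOn (fun h ↦ empiricalRisk ev x y N s h + lam * ‖h‖ ^ m) K f)
    (hf' : IsMinOn (fun h ↦ empiricalRisk ev x y N (s.erase i) h + lam * ‖h‖ ^ m) K f') :
    ‖f - f'‖ ≤ (2 ^ (m - 2) * (2 * (B + κ * (B ^ 2 / lam) ^ (1 / m))) * κ / (lam * N)) ^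
      (1 / (m - 1)) := by
  have hN : 0 < N := (Nat.cast_pos.2 (card_pos.2 ⟨i, hi⟩)).trans_le hs
  have hB : 0 ≤ B := (abs_nonneg _).trans (hy i hi)
  have hm0 : 0 < m := by linarith
  set R := (B ^ 2 / lam) ^ (1 / m)
  have hfR : ‖f‖ ≤ R := norm_le_of_isMinOn_empiricalRisk h0 hN hs hy hlam hm0 hf
  have hfR' : ‖f'‖ ≤ R := norm_le_of_isMinOn_empiricalRisk h0 hN
    ((Nat.cast_le.2 card_erase_le).trans hs) (fun k hk ↦ hy k (mem_of_mem_erase hk)) hlam hm0 hf'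
  have hmidR : ‖midpoint ℝ f f'‖ ≤ R := by
    rw [← mem_closedBall_zero_iff] at hfR hfR' ⊢
    exact (convex_closedBall 0 R).midpoint_mem hfR hfR'
  have hloss := sub_sq_sub_sub_sq_le_of_abs_le_mul_norm (φ := LinearMap.proj (x i) ∘ₗ ev) hκ hev
    (hy i hi) hmidR hfR
  simp only [empiricalRisk_eq_add_erase ev x y hi] at hf
  have hbound := norm_sub_le_of_isMinOn_add_norm_rpow (L := 1 / N * (2 * (B + κ * R) * κ))
    (by positivity) hlam hm (convexOn_empiricalRisk ev x y (s.erase i) hN.le hK) hfK hfK' hf hf'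
    (by
      rw [← mul_sub, mul_assoc]
      exact mul_le_mul_of_nonneg_left hloss (by positivity))
  convert hbound using 2
  field_simp

theorem mrlsr_hypothesis_stability_bound
    {X H : Type*} [NormedAddCommGroup H] [InnerProductSpace ℝ H]
    (κ : ℝ) (hκ : 0 < κ)
    (ev : H →ₗ[ℝ] (X → ℝ))
    (hev : ∀ (f : H) (x : X), |ev f x| ≤ κ * ‖f‖)
    (n : ℕ) (hn : 1 ≤ n) (x : Fin n → X) (y : Fin n → ℝ) (Cy : ℝ)
    (hy : ∀ k, |y k| ≤ Cy)
    (lam m : ℝ) (hlam : 0 < lam) (hm : 2 ≤ m)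
    (i : Fin n) (fZ fZi : H)
    (hfZ : ∀ f : H,
      (1 / n) * (∑ k, (y k - ev fZ (x k)) ^ 2) + lam * ‖fZ‖ ^ m ≤
        (1 / n) * (∑ k, (y k - ev f (x k)) ^ 2) + lam * ‖f‖ ^ m)
    (hfZi : ∀ f : H,
      (1 / n) * (∑ k ∈ Finset.univ.erase i, (y k - ev fZi (x k)) ^ 2) + lam * ‖fZi‖ ^ m ≤
        (1 / n) * (∑ k ∈ Finset.univ.erase i, (y k - ev f (x k)) ^ 2) + lam * ‖f‖ ^ m)
    (C : ℝ) (hC : C = 2 * (Cy + κ * (Cy ^ 2 / lam) ^ (1 / m))) :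
    ‖fZ - fZi‖ ≤ ((2 : ℝ) ^ (m - 2) * C * κ / (lam * n)) ^ (1 / (m - 1)) :=
  hC ▸ mrlsr_hypothesis_stability_bound_general convex_univ (Set.mem_univ 0) (mem_univ i) (by simp)
    hκ.le (hev · (x i)) (fun k _ ↦ hy k) hlam hm (Set.mem_univ fZ) (Set.mem_univ fZi)
    (isMinOn_univ_iff.2 hfZ) (isMinOn_univ_iff.2 hfZi)
end
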